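/- Let N ≥ 1 be an integer, p ∈ (0,1), and d an integer with 0 ≤ d ≤ N such that K_d(x;p,N) ≠ 0 for every integer x ∈ {0,1,…,N}. Then for all integers n, m ∈ {0,1,…,N} \ {d}: Σ_{x=0}^{N−1} [w(x;p,N−1)/(K_d(x;p,N)·K_d(x+1;p,N))] · K̂_n^{(1,d)}(x;p,N) · K̂_m^{(1,d)}(x;p,N) = δ_{n,m} · h_n/((n−d)·N·p·(1−p)), where w(x;p,M) = M!/(x!(M−x)!)·p^x·(1−p)^{M−x} and h_n = (−1)^n·(−N)_n·n!·p^n·(1−p)^n. -/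

import Mathlib

open Polynomial

/-- Pochhammer symbol `(c)_k = c (c+1) ⋯ (c+k−1)`. -/
noncomputable def poch (c : ℝ) (k : ℕ) : ℝ := ∏ i ∈ Finset.range k, (c + i)

/-- The monic Krawtchouk polynomial
`K_n(x;p,a) = Σ_{j=0}^{n} ((−n)_j (−a+j)_{n−j} / j!) p^{n−j} (−x)_j`,
where `(−x)_j = Π_{i=0}^{j−1} (i − x)` as a polynomial in `x`. -/
noncomputable def kraw (n : ℕ) (p a : ℝ) : Polynomial ℝ :=
  ∑ j ∈ Finset.range (n + 1),
    Polynomial.C (poch (-(n : ℝ)) j * poch (-a + j) (n - j) / (Nat.factorial j) * p ^ (n - j)) *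
      ∏ i ∈ Finset.range j, (Polynomial.C (i : ℝ) - Polynomial.X)

/-- The type-1 exceptional Krawtchouk polynomial
`K̂_n^{(1,d)}(x;p,N) = (K_d(x;p,N) K_n(x+1;p,N) − K_d(x+1;p,N) K_n(x;p,N))/(n−d)`. -/
noncomputable def xkraw1 (d n : ℕ) (p N : ℝ) : Polynomial ℝ :=
  Polynomial.C (1 / ((n : ℝ) - (d : ℝ))) *
    (kraw d p N * (kraw n p N).comp (Polynomial.X + 1) -
      (kraw d p N).comp (Polynomial.X + 1) * kraw n p N)

/-!
The polynomials `K_n(·;p,N)` are eigenfunctions, with eigenvalue `-n`, of a second-order difference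
operator which is symmetric for the binomial weight `w(·;p,N)`. Summation by parts (a discrete Green
identity) therefore turns `(n - d) ∑ w(x;p,N) K_d K_n u` into
`N p (1 - p) ∑ w(x;p,N-1) W_n (u(x+1) - u(x))`, where `W_n = (n - d) K̂_n` is the Casoratian of
`K_d` and `K_n`. The choice `u = 1` gives the orthogonality of the `K_n`; `d = 0`, `u = K_n` lowers
`n` and `N` by one and gives their norms. Finally, for `u = K_m / K_d` the difference
`u(x+1) - u(x)` is `W_m / (K_d(x) K_d(x+1))`, and the Green identity becomes the exceptional
orthogonality relation.
-/

/-- The Casoratian `g(x) f(x+1) - g(x+1) f(x)`, the discrete analogue of the Wronskian of `g`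
and `f`. -/
def casoratian {R : Type*} [CommRing R] (g f : R → R) (x : R) : R :=
  g x * f (x + 1) - g (x + 1) * f x

lemma div_add_one_sub_div {K : Type*} [Field K] (f g : K → K) {x : K} (hx : g x ≠ 0)
    (hx' : g (x + 1) ≠ 0) :
    f (x + 1) / g (x + 1) - f x / g x = casoratian g f x / (g x * g (x + 1)) := by
  rw [div_sub_div _ _ hx' hx, casoratian]
  ring

section Green

variable {R : Type*} [CommRing R]

/-- The binomial weight `w(x;p,N)`, against which the `K_n(·;p,N)` are orthogonal. It vanishes for
`x > N`, whatever the truncated exponent `N - x`. -/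
def binomWeight (N : ℕ) (p : R) (x : ℕ) : R :=
  (N.choose x : R) * p ^ x * (1 - p) ^ (N - x)

lemma sum_binomWeight (N : ℕ) (p : R) : ∑ x ∈ Finset.range (N + 1), binomWeight N p x = 1 := by
  simpa [bernsteinPolynomial, binomWeight, eval_finsetSum]
    using congrArg (eval p) (bernsteinPolynomial.sum R N)

lemma binomWeight_mul_sub (N : ℕ) (p : R) (x : ℕ) :
    binomWeight N p x * (p * (N - x)) = N * p * (1 - p) * binomWeight (N - 1) p x := by
  rcases lt_trichotomy x N with hx | rfl | hx
  · obtain ⟨k, rfl⟩ := Nat.exists_eq_add_of_lt hx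
    have hchoose : ((x + k).choose x : R) * (x + k + 1) = ((x + k + 1).choose x : R) * (k + 1) := by
      have h := Nat.choose_mul_succ_eq (x + k) x
      rw [show x + k + 1 - x = k + 1 by lia] at h
      exact_mod_cast congrArg (Nat.cast (R := R)) h
    simp only [binomWeight, Nat.add_sub_cancel, show x + k + 1 - x = k + 1 by lia,
      Nat.add_sub_cancel_left]
    push_cast
    linear_combination -(p ^ (x + 1) * (1 - p) ^ (k + 1)) * hchoose
  · rcases x with _ | x <;> simp [binomWeight]
  · have hx' : N - 1 < x := by lia
    simp [binomWeight, Nat.choose_eq_zero_of_lt hx, Nat.choose_eq_zero_of_lt hx']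

lemma binomWeight_succ_mul (N : ℕ) (p : R) (x : ℕ) :
    binomWeight N p (x + 1) * ((1 - p) * (x + 1)) = N * p * (1 - p) * binomWeight (N - 1) p x := by
  rcases N with _ | M
  · simp [binomWeight]
  · have hchoose : ((M : R) + 1) * (M.choose x : R) = ((M + 1).choose (x + 1) : R) * (x + 1) := by
      exact_mod_cast congrArg (Nat.cast (R := R)) (Nat.add_one_mul_choose_eq M x)
    simp only [binomWeight, Nat.add_sub_cancel, Nat.add_sub_add_right]
    push_cast
    linear_combination -(p ^ (x + 1) * (1 - p) ^ (M - x) * (1 - p)) * hchoose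

lemma sum_binomWeight_mul_sub (N : ℕ) (p : R) (F : R → R) :
    ∑ x ∈ Finset.range (N + 1), binomWeight N p x * (p * (N - x)) * F x =
      N * p * (1 - p) * ∑ x ∈ Finset.range N, binomWeight (N - 1) p x * F x := by
  rw [Finset.sum_range_succ, sub_self, mul_zero, mul_zero, zero_mul, add_zero, Finset.mul_sum]
  simp only [binomWeight_mul_sub, mul_assoc]

lemma sum_binomWeight_mul_self (N : ℕ) (p : R) (F : R → R) :
    ∑ x ∈ Finset.range (N + 1), binomWeight N p x * ((1 - p) * x) * F x =
      N * p * (1 - p) * ∑ x ∈ Finset.range N, binomWeight (N - 1) p x * F (x + 1) := by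
  rw [Finset.sum_range_succ', Nat.cast_zero, mul_zero, mul_zero, zero_mul, add_zero, Finset.mul_sum]
  simp only [Nat.cast_add, Nat.cast_one, binomWeight_succ_mul, mul_assoc]

/-- The second-order difference operator that has the polynomials `K_n(·;p,a)` as eigenfunctions;
for `a = N` it is symmetric with respect to the weight `w(·;p,N)`. -/
def krawOp (p a : R) (f : R → R) (x : R) : R :=
  p * (a - x) * (f (x + 1) - f x) - (1 - p) * x * (f x - f (x - 1))

lemma krawOp_sum {ι : Type*} (p a : R) (s : Finset ι) (c : ι → R) (f : ι → R → R) (x : R) :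
    krawOp p a (fun y => ∑ j ∈ s, c j * f j y) x = ∑ j ∈ s, c j * krawOp p a (f j) x := by
  simp only [krawOp, mul_sub, Finset.sum_sub_distrib, Finset.mul_sum]
  simp only [mul_left_comm]

lemma mul_krawOp_sub_mul_krawOp (p a : R) (f g : R → R) (x : R) :
    g x * krawOp p a f x - f x * krawOp p a g x =
      p * (a - x) * casoratian g f x - (1 - p) * x * casoratian g f (x - 1) := by
  simp only [krawOp, casoratian, sub_add_cancel]
  ring

theorem krawOp_green (N : ℕ) (p : R) (f g u : R → R) :
    ∑ x ∈ Finset.range (N + 1),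
        binomWeight N p x * ((f x * krawOp p N g x - g x * krawOp p N f x) * u x) =
      N * p * (1 - p) * ∑ x ∈ Finset.range N,
        binomWeight (N - 1) p x * (casoratian g f x * (u (x + 1) - u x)) := by
  have hup := sum_binomWeight_mul_sub N p fun y => casoratian g f y * u y
  have hdown := sum_binomWeight_mul_self N p fun y => casoratian g f (y - 1) * u y
  simp only [add_sub_cancel_right] at hdown
  calc
    _ = ∑ x ∈ Finset.range (N + 1),
          (binomWeight N p x * ((1 - p) * x) * (casoratian g f (x - 1) * u x) -
            binomWeight N p x * (p * (N - x)) * (casoratian g f x * u x)) :=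
      Finset.sum_congr rfl fun x _ => by
        linear_combination -(binomWeight N p x * u x) * mul_krawOp_sub_mul_krawOp p (N : R) f g x
    _ = _ := by
      rw [Finset.sum_sub_distrib, hup, hdown, ← mul_sub, ← Finset.sum_sub_distrib]
      simp only [mul_sub]

end Green

lemma poch_succ (c : ℝ) (k : ℕ) : poch c (k + 1) = poch c k * (c + k) :=
  Finset.prod_range_succ _ _

lemma poch_succ_left (c : ℝ) (k : ℕ) : poch c (k + 1) = c * poch (c + 1) k := by
  simp only [poch, Finset.prod_range_succ', Nat.cast_add, Nat.cast_one, Nat.cast_zero, add_zero,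
    add_assoc, add_comm (1 : ℝ), mul_comm c]

lemma poch_sub_one_succ_sub (c : ℝ) (k : ℕ) :
    poch (c - 1) (k + 1) - poch c (k + 1) = -(k + 1) * poch c k := by
  rw [poch_succ_left (c - 1), sub_add_cancel, poch_succ]
  ring

lemma krawOp_poch_neg_succ (p a x : ℝ) (j : ℕ) :
    krawOp p a (fun y => poch (-y) (j + 1)) x =
      -(j + 1) * poch (-x) (j + 1) - (j + 1) * p * (a - j) * poch (-x) j := by
  have hforward := poch_sub_one_succ_sub (-x) j
  have hbackward := poch_sub_one_succ_sub (-x + 1) j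
  rw [add_sub_cancel_right] at hbackward
  simp only [krawOp, show -(x + 1) = -x - 1 by ring, show -(x - 1) = -x + 1 by ring]
  linear_combination p * (a - x) * hforward - (1 - p) * x * hbackward +
    (1 - p) * (j + 1) * poch_succ_left (-x) j + p * (j + 1) * poch_succ (-x) j

/-- The coefficient of `(-x)_j` in the expansion of `K_n(x;p,a)` in Pochhammer symbols. -/
noncomputable def krawCoeff (n : ℕ) (p a : ℝ) (j : ℕ) : ℝ :=
  poch (-(n : ℝ)) j * poch (-a + j) (n - j) / (Nat.factorial j) * p ^ (n - j)

lemma eval_kraw (n : ℕ) (p a x : ℝ) :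
    (kraw n p a).eval x = ∑ j ∈ Finset.range (n + 1), krawCoeff n p a j * poch (-x) j := by
  simp [kraw, krawCoeff, poch, eval_finsetSum, eval_prod, neg_add_eq_sub]

lemma kraw_zero (p a : ℝ) : kraw 0 p a = 1 := by
  simp [kraw, poch]

lemma krawCoeff_mul_sub {n j : ℕ} (p a : ℝ) (hj : j < n) :
    krawCoeff n p a j * (n - j) = krawCoeff n p a (j + 1) * ((j + 1) * p * (a - j)) := by
  obtain ⟨k, rfl⟩ := Nat.exists_eq_add_of_lt hj
  simp only [krawCoeff, show j + k + 1 - j = k + 1 by lia, show j + k + 1 - (j + 1) = k by lia,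
    poch_succ_left (-a + j), poch_succ _ j, Nat.factorial_succ]
  push_cast
  rw [← add_assoc (-a)]
  field_simp
  ring

lemma krawCoeff_succ_succ (n : ℕ) (p a : ℝ) (j : ℕ) :
    krawCoeff (n + 1) p a (j + 1) * -(j + 1) = (n + 1) * krawCoeff n p (a - 1) j := by
  simp only [krawCoeff, Nat.add_sub_add_right, poch_succ_left _ j, Nat.factorial_succ]
  push_cast
  rw [show -a + ((j : ℝ) + 1) = -(a - 1) + j by ring, show -((n : ℝ) + 1) + 1 = -n by ring]
  field_simp

theorem eval_kraw_add_one_sub (n : ℕ) (p a x : ℝ) :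
    (kraw (n + 1) p a).eval (x + 1) - (kraw (n + 1) p a).eval x =
      (n + 1) * (kraw n p (a - 1)).eval x := by
  simp only [eval_kraw, ← Finset.sum_sub_distrib, ← mul_sub]
  rw [Finset.sum_range_succ', Finset.mul_sum]
  simp only [neg_add' x, poch_sub_one_succ_sub, ← mul_assoc, krawCoeff_succ_succ]
  simp [poch]

theorem krawOp_kraw (n : ℕ) (p a x : ℝ) :
    krawOp p a (fun y => (kraw n p a).eval y) x = -n * (kraw n p a).eval x := by
  have hlower : ∑ j ∈ Finset.range n,
        krawCoeff n p a (j + 1) * ((j + 1) * p * (a - j)) * poch (-x) j =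
      ∑ j ∈ Finset.range (n + 1), krawCoeff n p a j * (n - j) * poch (-x) j := by
    rw [Finset.sum_range_succ, sub_self, mul_zero, zero_mul, add_zero]
    exact Finset.sum_congr rfl fun j hj => by rw [krawCoeff_mul_sub p a (Finset.mem_range.1 hj)]
  have hdiag : ∑ j ∈ Finset.range n, krawCoeff n p a (j + 1) * (j + 1) * poch (-x) (j + 1) =
      ∑ j ∈ Finset.range (n + 1), krawCoeff n p a j * j * poch (-x) j := by
    simp [Finset.sum_range_succ']
  calc
    _ = ∑ j ∈ Finset.range (n + 1), krawCoeff n p a j * krawOp p a (fun y => poch (-y) j) x := by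
      simp only [eval_kraw, krawOp_sum]
    _ = -∑ j ∈ Finset.range n, krawCoeff n p a (j + 1) * (j + 1) * poch (-x) (j + 1) -
          ∑ j ∈ Finset.range n,
            krawCoeff n p a (j + 1) * ((j + 1) * p * (a - j)) * poch (-x) j := by
      have hzero : krawOp p a (fun y => poch (-y) 0) x = 0 := by simp [krawOp, poch]
      rw [Finset.sum_range_succ', hzero, mul_zero, add_zero, ← Finset.sum_neg_distrib,
        ← Finset.sum_sub_distrib]
      exact Finset.sum_congr rfl fun j _ => by rw [krawOp_poch_neg_succ]; ring
    _ = -n * (kraw n p a).eval x := by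
      rw [hdiag, hlower, eval_kraw, ← Finset.sum_neg_distrib, ← Finset.sum_sub_distrib,
        Finset.mul_sum]
      exact Finset.sum_congr rfl fun j _ => by ring

theorem kraw_green (N d n : ℕ) (p : ℝ) (u : ℝ → ℝ) :
    ((n : ℝ) - d) * ∑ x ∈ Finset.range (N + 1),
        binomWeight N p x * ((kraw d p N).eval (x : ℝ) * (kraw n p N).eval (x : ℝ) * u x) =
      N * p * (1 - p) * ∑ x ∈ Finset.range N, binomWeight (N - 1) p x *
        (casoratian (fun y => (kraw d p N).eval y) (fun y => (kraw n p N).eval y) x *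
          (u (x + 1) - u x)) := by
  rw [← krawOp_green, Finset.mul_sum]
  exact Finset.sum_congr rfl fun x _ => by simp only [krawOp_kraw]; ring

theorem sum_binomWeight_mul_kraw_mul_kraw_of_ne {n m : ℕ} (hnm : n ≠ m) (N : ℕ) (p : ℝ) :
    ∑ x ∈ Finset.range (N + 1),
      binomWeight N p x * ((kraw n p N).eval (x : ℝ) * (kraw m p N).eval (x : ℝ)) = 0 := by
  have h := kraw_green N n m p fun _ => 1
  simp only [mul_one, sub_self, mul_zero, Finset.sum_const_zero] at h
  exact (mul_eq_zero.1 h).resolve_left (sub_ne_zero.2 (Nat.cast_injective.ne hnm.symm))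

/-- The squared norm `h_n` of `K_n(·;p,N)` with respect to the weight `w(·;p,N)`. -/
noncomputable def krawNormSq (N n : ℕ) (p : ℝ) : ℝ :=
  (-1 : ℝ) ^ n * poch (-(N : ℝ)) n * (n.factorial : ℝ) * p ^ n * (1 - p) ^ n

lemma krawNormSq_succ (N n : ℕ) (p : ℝ) :
    krawNormSq N (n + 1) p = N * p * (1 - p) * ((n + 1) * krawNormSq (N - 1) n p) := by
  rcases N with _ | M
  · simp [krawNormSq, poch_succ_left]
  · simp only [krawNormSq, poch_succ_left, Nat.factorial_succ, Nat.add_sub_cancel]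
    push_cast
    rw [neg_add, neg_add_cancel_right]
    ring

theorem sum_binomWeight_mul_kraw_sq (N n : ℕ) (p : ℝ) :
    ∑ x ∈ Finset.range (N + 1), binomWeight N p x * (kraw n p N).eval (x : ℝ) ^ 2 =
      krawNormSq N n p := by
  induction n generalizing N with
  | zero => simpa [kraw_zero, krawNormSq, poch] using sum_binomWeight N p
  | succ n ih =>
    have hn_ne : ((n + 1 : ℕ) : ℝ) - (0 : ℕ) ≠ 0 := by simp [n.cast_add_one_ne_zero]
    apply mul_left_cancel₀ hn_ne
    calc
      _ = N * p * (1 - p) * ∑ x ∈ Finset.range N, binomWeight (N - 1) p x *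
            ((n + 1) * (kraw n p (N - 1)).eval (x : ℝ)) ^ 2 := by
        simpa [casoratian, kraw_zero, eval_kraw_add_one_sub, ← sq]
          using kraw_green N 0 (n + 1) p fun y => (kraw (n + 1) p N).eval y
      _ = N * p * (1 - p) * ((n + 1) ^ 2 * krawNormSq (N - 1) n p) := by
        rcases N with _ | M
        · simp
        · rw [← ih, Nat.add_sub_cancel, Nat.cast_add_one, add_sub_cancel_right,
            Finset.mul_sum _ _ (((n : ℝ) + 1) ^ 2)]
          simp only [mul_pow, mul_left_comm]
      _ = _ := by
        rw [krawNormSq_succ]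
        push_cast
        ring

theorem sum_binomWeight_mul_kraw_mul_kraw (N n m : ℕ) (p : ℝ) :
    ∑ x ∈ Finset.range (N + 1),
        binomWeight N p x * ((kraw n p N).eval (x : ℝ) * (kraw m p N).eval (x : ℝ)) =
      (if n = m then 1 else 0) * krawNormSq N n p := by
  split_ifs with hnm
  · rw [← hnm, one_mul, ← sum_binomWeight_mul_kraw_sq]
    simp only [sq]
  · rw [zero_mul, sum_binomWeight_mul_kraw_mul_kraw_of_ne hnm]

lemma sub_mul_eval_xkraw1 {d n : ℕ} (hnd : n ≠ d) (p a x : ℝ) :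
    ((n : ℝ) - d) * (xkraw1 d n p a).eval x =
      casoratian (fun y => (kraw d p a).eval y) (fun y => (kraw n p a).eval y) x := by
  have hsub : (n : ℝ) - d ≠ 0 := sub_ne_zero.2 (Nat.cast_injective.ne hnd)
  simp [xkraw1, casoratian, hsub]

theorem sum_binomWeight_mul_xkraw1_mul_xkraw1 {N d n m : ℕ} (p : ℝ)
    (hKd : ∀ x : ℕ, x ≤ N → (kraw d p N).eval (x : ℝ) ≠ 0) (hnd : n ≠ d) (hmd : m ≠ d) :
    N * p * (1 - p) * ((n : ℝ) - d) * ∑ x ∈ Finset.range N,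
        binomWeight (N - 1) p x /
              ((kraw d p N).eval (x : ℝ) * (kraw d p N).eval ((x : ℝ) + 1)) *
            (xkraw1 d n p N).eval (x : ℝ) * (xkraw1 d m p N).eval (x : ℝ) =
      ∑ x ∈ Finset.range (N + 1),
        binomWeight N p x * ((kraw n p N).eval (x : ℝ) * (kraw m p N).eval (x : ℝ)) := by
  have hsub : (m : ℝ) - d ≠ 0 := sub_ne_zero.2 (Nat.cast_injective.ne hmd)
  apply mul_left_cancel₀ hsub
  calc
    _ = N * p * (1 - p) * ∑ x ∈ Finset.range N, binomWeight (N - 1) p x *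
          (casoratian (fun y => (kraw d p N).eval y) (fun y => (kraw m p N).eval y) x *
            ((kraw n p N).eval ((x : ℝ) + 1) / (kraw d p N).eval ((x : ℝ) + 1) -
              (kraw n p N).eval (x : ℝ) / (kraw d p N).eval (x : ℝ))) := by
      simp only [Finset.mul_sum]
      refine Finset.sum_congr rfl fun x hx => ?_
      have hxN : x < N := Finset.mem_range.1 hx
      have hKd_succ : (kraw d p N).eval ((x : ℝ) + 1) ≠ 0 := mod_cast hKd (x + 1) hxN
      rw [div_add_one_sub_div (fun y => (kraw n p N).eval y) (fun y => (kraw d p N).eval y)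
        (hKd x hxN.le) hKd_succ, ← sub_mul_eval_xkraw1 hnd, ← sub_mul_eval_xkraw1 hmd]
      ring
    _ = ((m : ℝ) - d) * ∑ x ∈ Finset.range (N + 1), binomWeight N p x *
          ((kraw d p N).eval (x : ℝ) * (kraw m p N).eval (x : ℝ) *
            ((kraw n p N).eval (x : ℝ) / (kraw d p N).eval (x : ℝ))) :=
      (kraw_green N d m p fun y => (kraw n p N).eval y / (kraw d p N).eval y).symm
    _ = _ := by
      congr 1
      refine Finset.sum_congr rfl fun x hx => ?_
      have hKd_x := hKd x (Finset.mem_range_succ_iff.1 hx)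
      field_simp

theorem krawtchouk_exceptional1_orthogonality_general {N : ℕ} (hN : 1 ≤ N) {p : ℝ}
    (hp0 : p ≠ 0) (hp1 : p ≠ 1) {d : ℕ}
    (hKd : ∀ x : ℕ, x ≤ N → (kraw d p N).eval (x : ℝ) ≠ 0) {n m : ℕ} (hnd : n ≠ d) (hmd : m ≠ d) :
    ∑ x ∈ Finset.range N,
        binomWeight (N - 1) p x /
              ((kraw d p N).eval (x : ℝ) * (kraw d p N).eval ((x : ℝ) + 1)) *
            (xkraw1 d n p N).eval (x : ℝ) * (xkraw1 d m p N).eval (x : ℝ) =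
      (if n = m then 1 else 0) * krawNormSq N n p / (((n : ℝ) - d) * N * p * (1 - p)) := by
  have hdenom : ((n : ℝ) - d) * N * p * (1 - p) ≠ 0 :=
    mul_ne_zero (mul_ne_zero (mul_ne_zero (sub_ne_zero.2 (Nat.cast_injective.ne hnd))
      (Nat.cast_ne_zero.2 (Nat.one_le_iff_ne_zero.1 hN))) hp0) (sub_ne_zero.2 hp1.symm)
  rw [eq_div_iff hdenom, ← sum_binomWeight_mul_kraw_mul_kraw,
    ← sum_binomWeight_mul_xkraw1_mul_xkraw1 p hKd hnd hmd]
  ring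

/-- The discrete orthogonality relation for the type-1 exceptional Krawtchouk polynomials:
`Σ_{x=0}^{N−1} [w(x;p,N−1)/(K_d(x) K_d(x+1))] K̂_n^{(1,d)}(x) K̂_m^{(1,d)}(x)
  = δ_{n,m} h_n/((n−d) N p (1−p))`. -/
theorem krawtchouk_exceptional1_orthogonality (N : ℕ) (hN : 1 ≤ N) (p : ℝ)
    (hp0 : 0 < p) (hp1 : p < 1) (d : ℕ) (hd : d ≤ N)
    (hKd : ∀ x : ℕ, x ≤ N → Polynomial.eval (x : ℝ) (kraw d p (N : ℝ)) ≠ 0)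
    (n m : ℕ) (hnN : n ≤ N) (hmN : m ≤ N) (hnd : n ≠ d) (hmd : m ≠ d) :
    ∑ x ∈ Finset.range N,
        (((N - 1).choose x : ℝ) * p ^ x * (1 - p) ^ (N - 1 - x) /
            (Polynomial.eval (x : ℝ) (kraw d p (N : ℝ)) *
              Polynomial.eval ((x : ℝ) + 1) (kraw d p (N : ℝ)))) *
          Polynomial.eval (x : ℝ) (xkraw1 d n p (N : ℝ)) *
          Polynomial.eval (x : ℝ) (xkraw1 d m p (N : ℝ)) =
      (if n = m then 1 else 0) *
        ((-1 : ℝ) ^ n * poch (-(N : ℝ)) n * (n.factorial : ℝ) * p ^ n * (1 - p) ^ n) /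
        (((n : ℝ) - (d : ℝ)) * (N : ℝ) * p * (1 - p)) :=
  krawtchouk_exceptional1_orthogonality_general hN hp0.ne' hp1.ne hKd hnd hmd
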